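/- Assume q ≡ 1 (mod 4). Let p and r be distinct internal points such that the line through p and r is a secant. Then |U_{p,N(r)} ∩ C| is even for each of the following class sets C: C = {1}; C = [4]; C = [θ] for any nonzero square θ ≠ 4 with θ-4 a nonzero square; C = [π] for any nonzero square π ≠ 4 with π-4 a nonsquare. -/

import Mathlib

/-!
Let `ℓ = [b0,b1,b2]` be the secant through `p` and `r`, with discriminant `D`, and let `τ` be the
harmonic homology with axis `ℓ` and centre the pole of `ℓ`. It is induced by the matrix `refl b`,
which belongs to the trace-zero `2 × 2` matrix `(-b1, 2 b0; -2 b2, b1)`, squares to `D²` and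
satisfies `v * refl b = D v + 2 (v·b) e`, where `e` represents the pole (`vecMul_refl`).

Conjugation by `τ` preserves `H` (`conj_mem_Hset`), traces and the identity, hence every class set
`C`. As `τ` fixes `p` and `r` and preserves internal points and passants, conjugation by `τ` also
preserves the condition `p^h ∈ N(r)` (`nbr_conj`). Hence it is an involution on `U_{p,N(r)} ∩ C`,
and it is enough to see that it has no fixed points. If `h` commutes with `τ`, then `p^h` is fixed
by `τ` with the same eigenvalue as `p`, so it lies on `ℓ`; then the only line joining `p^h ≠ r`
to `r` is the secant `ℓ`, so that `p^h ∉ N(r)` (`conj_ne`).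
-/

open scoped Classical

noncomputable section

namespace ConicPaper

variable (K : Type) [Field K] [Fintype K]

/-- Points (and also lines, via homogeneous coordinates) of `PG(2,q)`. -/
abbrev Pt := Projectivization K (Fin 3 → K)

instance : Fintype (Pt K) := @Fintype.ofFinite _ (Quotient.finite _)

/-- `a` is a nonsquare in `K`. -/
def Nonsq (a : K) : Prop := ¬ IsSquare a

/-- The quadratic form `Q(x0,x1,x2) = x1^2 - x0*x2` defining the conic. -/
def Qf (v : Fin 3 → K) : K := v 1 ^ 2 - v 0 * v 2

/-- A point is internal when `Q` of (a representative of) it is a nonsquare. -/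
def Internal (p : Pt K) : Prop := Nonsq K (Qf K p.rep)

/-- A point is external when `Q` of it is a nonzero square. -/
def External (p : Pt K) : Prop := Qf K p.rep ≠ 0 ∧ IsSquare (Qf K p.rep)

/-- The point `p` lies on the line `ℓ = [b0,b1,b2]`. -/
def OnL (p ℓ : Pt K) : Prop :=
  p.rep 0 * ℓ.rep 0 + p.rep 1 * ℓ.rep 1 + p.rep 2 * ℓ.rep 2 = 0

/-- Discriminant `b1^2 - 4 b0 b2` of a line. -/
def lineDisc (ℓ : Pt K) : K := ℓ.rep 1 ^ 2 - 4 * ℓ.rep 0 * ℓ.rep 2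

/-- A line is a passant when its discriminant is a nonsquare. -/
def Passant (ℓ : Pt K) : Prop := Nonsq K (lineDisc K ℓ)

/-- A line is a secant when its discriminant is a nonzero square. -/
def Secant (ℓ : Pt K) : Prop := lineDisc K ℓ ≠ 0 ∧ IsSquare (lineDisc K ℓ)

/-- The incidence pairing of the vector `w` with the polar line
`p^⊥ = [z, -2y, x]` of the point `p = (x,y,z)`. -/
def perpDot (p : Pt K) (w : Fin 3 → K) : K :=
  w 0 * p.rep 2 + w 1 * (-2 * p.rep 1) + w 2 * p.rep 0

/-- The point `r` lies on the passant line `p^⊥`. -/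
def OnPerp (p r : Pt K) : Prop := perpDot K p r.rep = 0

/-- The (finite) set `I` of internal points, as a type. -/
abbrev Ipts := {p : Pt K // Internal K p}

instance : Fintype (Ipts K) := Fintype.ofFinite _

/-- `N(p)`: the internal points lying on at least one passant line through `p`;
`p` itself is excluded when `q ≡ 1 (mod 4)` and included when `q ≡ 3 (mod 4)`. -/
def NbhdSet (p : Pt K) : Set (Pt K) :=
  if Fintype.card K % 4 = 1 then
    {r | Internal K r ∧ r ≠ p ∧ ∃ ℓ, Passant K ℓ ∧ OnL K p ℓ ∧ OnL K r ℓ}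
  else
    {r | Internal K r ∧ ∃ ℓ, Passant K ℓ ∧ OnL K p ℓ ∧ OnL K r ℓ}

/-- The line through `p` and `r` is a passant. -/
def PassantThru (p r : Pt K) : Prop := ∃ ℓ, OnL K p ℓ ∧ OnL K r ℓ ∧ Passant K ℓ

/-- The line through `p` and `r` is a secant. -/
def SecantThru (p r : Pt K) : Prop := ∃ ℓ, OnL K p ℓ ∧ OnL K r ℓ ∧ Secant K ℓ

/-- The action of a (nonsingular) matrix `M` on points of `PG(2,q)`:
`p ↦ p·M`.  (If `p.rep ᵥ* M` were zero -- impossible for invertible `M` --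
we return `p`, making the function total.) -/
def actPt (M : Matrix (Fin 3) (Fin 3) K) (p : Pt K) : Pt K :=
  if h : Matrix.vecMul p.rep M ≠ 0 then Projectivization.mk K (Matrix.vecMul p.rep M) h else p

/-- The group `H ≅ PSL(2,q)`, given by its set of matrix representatives. -/
def Hset : Set (Matrix (Fin 3) (Fin 3) K) :=
  {M | ∃ a b c d : K, a * d - b * c = 1 ∧
    M = !![a^2, a*b, b^2; 2*a*c, a*d + b*c, 2*b*d; c^2, c*d, d^2]}

/-- The class set `{g ∈ H : T(g) = tr(g) + 1 = s}` for `s ∈ F_q`. -/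
def classOf (s : K) : Set (Matrix (Fin 3) (Fin 3) K) :=
  {g | g ∈ Hset K ∧ Matrix.trace g + 1 = s}

/-- The class set `[4] = {g ∈ H : T(g) = 4, g ≠ 1}`. -/
def class4 : Set (Matrix (Fin 3) (Fin 3) K) :=
  {g | g ∈ Hset K ∧ Matrix.trace g + 1 = 4 ∧ g ≠ 1}

/-- `U_{p,W} = {h ∈ H : p^h ∈ W}`. -/
def Uset (p : Pt K) (W : Set (Pt K)) : Set (Matrix (Fin 3) (Fin 3) K) :=
  {M | M ∈ Hset K ∧ actPt K M p ∈ W}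

section Reflection

/-! ### The homology and its action on coordinate vectors -/

open scoped Matrix

set_option linter.unusedSectionVars false

variable {K}

/-- The `3 × 3` matrix by which the `2 × 2` matrix `(a, b; c, d)` acts on `PG(2,q)`; the elements
of `H` are those with `a * d - b * c = 1`. -/
def symSq (a b c d : K) : Matrix (Fin 3) (Fin 3) K :=
  !![a^2, a*b, b^2; 2*a*c, a*d + b*c, 2*b*d; c^2, c*d, d^2]

/-- The discriminant of a line, on coordinate vectors. -/
def discV (w : Fin 3 → K) : K := w 1 ^ 2 - 4 * w 0 * w 2

/-- The incidence pairing of points and lines, on coordinate vectors. -/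
def pairV (v w : Fin 3 → K) : K := v 0 * w 0 + v 1 * w 1 + v 2 * w 2

/-- A matrix of the harmonic homology whose axis is the line `b` and whose centre is its pole. -/
def refl (b : Fin 3 → K) : Matrix (Fin 3) (Fin 3) K :=
  symSq (-b 1) (2 * b 0) (-2 * b 2) (b 1)

/-- Conjugation of matrices by the homology with axis `b`; since `refl b` squares to the scalar
`discV b ^ 2`, this is an involution when `discV b ≠ 0`. -/
def conjR (b : Fin 3 → K) (M : Matrix (Fin 3) (Fin 3) K) : Matrix (Fin 3) (Fin 3) K :=
  (discV b ^ 2)⁻¹ • (refl b * M * refl b)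

lemma symSq_mul (a b c d a' b' c' d' : K) :
    symSq a b c d * symSq a' b' c' d' =
      symSq (a*a' + b*c') (a*b' + b*d') (c*a' + d*c') (c*b' + d*d') := by
  ext i j
  fin_cases i <;> fin_cases j <;>
    simp [symSq, Matrix.mul_apply, Fin.sum_univ_three] <;> ring

lemma smul_symSq (k a b c d : K) :
    k ^ 2 • symSq a b c d = symSq (k * a) (k * b) (k * c) (k * d) := by
  ext i j
  fin_cases i <;> fin_cases j <;> simp [symSq] <;> ring

lemma refl_mul_refl (b : Fin 3 → K) : refl b * refl b = discV b ^ 2 • 1 := by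
  ext i j
  fin_cases i <;> fin_cases j <;>
    simp [refl, symSq, discV, Matrix.mul_apply, Fin.sum_univ_three] <;> ring

lemma vecMul_refl (b v : Fin 3 → K) :
    Matrix.vecMul v (refl b) =
      discV b • v + (2 * pairV v b) • ![2 * b 2, - b 1, 2 * b 0] := by
  ext j
  fin_cases j <;>
    simp [refl, symSq, discV, pairV, Matrix.vecMul, dotProduct, Fin.sum_univ_three] <;> ring

lemma vecMul_refl_of_pairV (b v : Fin 3 → K) (h : pairV v b = 0) :
    Matrix.vecMul v (refl b) = discV b • v := by
  rw [vecMul_refl, h]; simp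

lemma Qf_symSq (a b c d : K) (v : Fin 3 → K) :
    Qf K (Matrix.vecMul v (symSq a b c d)) = (a * d - b * c) ^ 2 * Qf K v := by
  simp [Qf, symSq, Matrix.vecMul, dotProduct, Fin.sum_univ_three]; ring

lemma Qf_refl (b v : Fin 3 → K) :
    Qf K (Matrix.vecMul v (refl b)) = discV b ^ 2 * Qf K v := by
  rw [refl, Qf_symSq, discV]; ring

lemma discV_refl (b w : Fin 3 → K) :
    discV (Matrix.mulVec (refl b) w) = discV b ^ 2 * discV w := by
  simp [discV, refl, symSq, Matrix.mulVec, dotProduct, Fin.sum_univ_three]; ring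

lemma pairV_eq (v w : Fin 3 → K) : pairV v w = v ⬝ᵥ w := by
  simp [pairV, dotProduct, Fin.sum_univ_three]

lemma pairV_mulVec (v w : Fin 3 → K) (M : Matrix (Fin 3) (Fin 3) K) :
    pairV v (Matrix.mulVec M w) = pairV (Matrix.vecMul v M) w := by
  rw [pairV_eq, pairV_eq, Matrix.dotProduct_mulVec]

lemma Qf_smul (c : K) (v : Fin 3 → K) : Qf K (c • v) = c ^ 2 * Qf K v := by
  simp [Qf]; ring

lemma discV_smul (c : K) (v : Fin 3 → K) : discV (c • v) = c ^ 2 * discV v := by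
  simp [discV]; ring

lemma pairV_smul_left (c : K) (v w : Fin 3 → K) : pairV (c • v) w = c * pairV v w := by
  simp [pairV]; ring

lemma pairV_smul_right (c : K) (v w : Fin 3 → K) : pairV v (c • w) = c * pairV v w := by
  simp [pairV]; ring

lemma nonsq_sq_mul {c a : K} (hc : c ≠ 0) : Nonsq K (c ^ 2 * a) ↔ Nonsq K a := by
  unfold Nonsq
  refine not_congr ⟨?_, fun h => (IsSquare.sq c).mul h⟩
  intro h
  have h2 := (IsSquare.sq c⁻¹).mul h
  rwa [← mul_assoc, ← mul_pow, inv_mul_cancel₀ hc, one_pow, one_mul] at h2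

/-! ### Conjugation by the homology -/

lemma conjR_conjR {b : Fin 3 → K} (hD : discV b ≠ 0) (M : Matrix (Fin 3) (Fin 3) K) :
    conjR b (conjR b M) = M := by
  have : refl b * (refl b * M * refl b) * refl b = (discV b ^ 2 * discV b ^ 2) • M := by
    calc _ = (refl b * refl b) * M * (refl b * refl b) := by simp only [mul_assoc]
      _ = _ := by rw [refl_mul_refl]; simp [smul_smul]
  simp only [conjR, Matrix.mul_smul, Matrix.smul_mul, this, smul_smul]
  rw [show (discV b ^ 2)⁻¹ * ((discV b ^ 2)⁻¹ * (discV b ^ 2 * discV b ^ 2)) = 1 by field_simp]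
  simp

lemma trace_conjR {b : Fin 3 → K} (hD : discV b ≠ 0) (M : Matrix (Fin 3) (Fin 3) K) :
    (conjR b M).trace = M.trace := by
  rw [conjR, Matrix.trace_smul, Matrix.trace_mul_comm, ← mul_assoc, refl_mul_refl]
  simp [hD]

lemma conjR_one {b : Fin 3 → K} (hD : discV b ≠ 0) : conjR b (1 : Matrix _ _ K) = 1 := by
  rw [conjR, mul_one, refl_mul_refl, smul_smul, inv_mul_cancel₀ (pow_ne_zero 2 hD), one_smul]

lemma conj_mem_Hset {b : Fin 3 → K} (hD : discV b ≠ 0) {M : Matrix (Fin 3) (Fin 3) K}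
    (hM : M ∈ Hset K) : conjR b M ∈ Hset K := by
  obtain ⟨a, x, c, d, hdet, rfl⟩ := hM
  have hconj : conjR b (symSq a x c d) =
      (discV b)⁻¹ ^ 2 • (refl b * symSq a x c d * refl b) := by
    rw [conjR, inv_pow]
  rw [refl, symSq_mul, symSq_mul, smul_symSq] at hconj
  refine ⟨_, _, _, _, ?_, hconj⟩
  have hD' : discV b = b 1 ^ 2 - 4 * b 0 * b 2 := rfl
  have e : (discV b)⁻¹ ^ 2 * (discV b ^ 2 * (a * d - x * c)) = 1 := by
    rw [hdet]; field_simp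
  rw [← e]
  generalize (discV b)⁻¹ = k
  rw [hD']
  ring

/-! ### Neighbourhoods in coordinates -/

/-- Vector form of `v ∈ N(u)` for `q ≡ 1 (mod 4)`. -/
def NbrV (u v : Fin 3 → K) : Prop :=
  Nonsq K (Qf K v) ∧ (¬ ∃ c : K, c • u = v) ∧
    ∃ w, Nonsq K (discV w) ∧ pairV u w = 0 ∧ pairV v w = 0

lemma mem_NbhdSet_mk (h1 : Fintype.card K % 4 = 1) (r : Pt K) (v : Fin 3 → K) (hv : v ≠ 0) :
    Projectivization.mk K v hv ∈ NbhdSet K r ↔ NbrV r.rep v := by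
  obtain ⟨c, hc⟩ := Projectivization.exists_smul_eq_mk_rep K v hv
  have hc' : (Projectivization.mk K v hv).rep = (c : K) • v := hc.symm
  have hc0 : (c : K) ≠ 0 := c.ne_zero
  rw [NbhdSet, if_pos h1, Set.mem_ofPred_eq, NbrV, Internal, hc', Qf_smul, nonsq_sq_mul hc0]
  refine and_congr Iff.rfl (and_congr (not_congr ?_) ?_)
  · conv_lhs => rw [← r.mk_rep]
    rw [Projectivization.mk_eq_mk_iff']
  · constructor
    · rintro ⟨l, hl, hrl, hvl⟩
      refine ⟨l.rep, hl, hrl, ?_⟩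
      have : pairV (Projectivization.mk K v hv).rep l.rep = 0 := hvl
      rw [hc', pairV_smul_left] at this
      exact (mul_eq_zero.1 this).resolve_left hc0
    · rintro ⟨w, hw, hrw, hvw⟩
      have hw0 : w ≠ 0 := by
        rintro rfl
        exact hw (by simp [discV])
      obtain ⟨k, hk⟩ := Projectivization.exists_smul_eq_mk_rep K w hw0
      have hk' : (Projectivization.mk K w hw0).rep = (k : K) • w := hk.symm
      refine ⟨Projectivization.mk K w hw0, ?_, ?_, ?_⟩
      · change Nonsq K (discV _)
        rwa [hk', discV_smul, nonsq_sq_mul k.ne_zero]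
      · change pairV _ _ = 0
        rw [hk', pairV_smul_right, hrw, mul_zero]
      · change pairV _ _ = 0
        rw [hk', hc', pairV_smul_right, pairV_smul_left, hvw, mul_zero, mul_zero]

lemma mem_Uset_iff (h1 : Fintype.card K % 4 = 1) (p r : Pt K) (hp : Internal K p)
    (M : Matrix (Fin 3) (Fin 3) K) :
    M ∈ Uset K p (NbhdSet K r) ↔ M ∈ Hset K ∧ NbrV r.rep (Matrix.vecMul p.rep M) := by
  refine and_congr_right fun hM => ?_
  have h0 : Matrix.vecMul p.rep M ≠ 0 := by
    intro h
    obtain ⟨a, b, c, d, hdet, rfl⟩ := hM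
    have := Qf_symSq a b c d p.rep
    rw [hdet, one_pow, one_mul, symSq, h] at this
    exact hp (by rw [← this]; simp [Qf])
  rw [actPt, dif_pos h0, mem_NbhdSet_mk h1]

lemma NbrV.smul {u v : Fin 3 → K} {k : K} (hk : k ≠ 0) (h : NbrV u v) : NbrV u (k • v) := by
  obtain ⟨h1, h2, w, hw, huw, hvw⟩ := h
  refine ⟨by rwa [Qf_smul, nonsq_sq_mul hk], ?_, w, hw, huw, ?_⟩
  · rintro ⟨c, hc⟩
    exact h2 ⟨k⁻¹ * c, by rw [mul_smul, hc, smul_smul, inv_mul_cancel₀ hk, one_smul]⟩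
  · rw [pairV_smul_left, hvw, mul_zero]

/-- The homology with axis `b` preserves the neighbourhood of every point of its axis. -/
lemma nbr_refl {b u v : Fin 3 → K} (hD : discV b ≠ 0) (hu : pairV u b = 0) (h : NbrV u v) :
    NbrV u (Matrix.vecMul v (refl b)) := by
  obtain ⟨h1, h2, w, hw, huw, hvw⟩ := h
  have hsq : ∀ x : Fin 3 → K,
      Matrix.vecMul (Matrix.vecMul x (refl b)) (refl b) = discV b ^ 2 • x := by
    intro x
    rw [Matrix.vecMul_vecMul, refl_mul_refl, Matrix.vecMul_smul, Matrix.vecMul_one]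
  refine ⟨by rwa [Qf_refl, nonsq_sq_mul hD], ?_, Matrix.mulVec (refl b) w, ?_, ?_, ?_⟩
  · rintro ⟨c, hc⟩
    refine h2 ⟨(discV b ^ 2)⁻¹ * (c * discV b), ?_⟩
    have := hsq v
    rw [← hc, Matrix.smul_vecMul, vecMul_refl_of_pairV b u hu, smul_smul] at this
    rw [mul_smul, this, smul_smul, inv_mul_cancel₀ (pow_ne_zero 2 hD), one_smul]
  · rwa [discV_refl, nonsq_sq_mul hD]
  · rw [pairV_mulVec, vecMul_refl_of_pairV b u hu, pairV_smul_left, huw, mul_zero]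
  · rw [pairV_mulVec, hsq, pairV_smul_left, hvw, mul_zero]

lemma nbr_conj {b u p : Fin 3 → K} (hD : discV b ≠ 0) (hu : pairV u b = 0) (hp : pairV p b = 0)
    {M : Matrix (Fin 3) (Fin 3) K} (h : NbrV u (Matrix.vecMul p M)) :
    NbrV u (Matrix.vecMul p (conjR b M)) := by
  have : Matrix.vecMul p (conjR b M) =
      ((discV b ^ 2)⁻¹ * discV b) • Matrix.vecMul (Matrix.vecMul p M) (refl b) := by
    rw [conjR, Matrix.vecMul_smul, ← Matrix.vecMul_vecMul, ← Matrix.vecMul_vecMul,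
      vecMul_refl_of_pairV b p hp, Matrix.smul_vecMul, Matrix.smul_vecMul, smul_smul]
  rw [this]
  exact (nbr_refl hD hu h).smul (mul_ne_zero (inv_ne_zero (pow_ne_zero 2 hD)) hD)

lemma exists_smul_of_minors {x y : Fin 3 → K} (hx : x ≠ 0)
    (h01 : x 0 * y 1 = x 1 * y 0) (h02 : x 0 * y 2 = x 2 * y 0) (h12 : x 1 * y 2 = x 2 * y 1) :
    ∃ c : K, c • x = y := by
  have : ∃ i, x i ≠ 0 := by
    by_contra! h
    exact hx (funext h)
  obtain ⟨i, hi⟩ := this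
  refine ⟨y i / x i, ?_⟩
  ext j
  simp only [Pi.smul_apply, smul_eq_mul]
  rw [div_mul_eq_mul_div, div_eq_iff hi]
  fin_cases i <;> fin_cases j <;> simp <;> grind

/-- Two points on a common secant `b` are not neighbours, since `b` is the only line joining
them. -/
lemma not_nbr_of_secant {b u v : Fin 3 → K} (hD : discV b ≠ 0) (hsq : IsSquare (discV b))
    (hu0 : u ≠ 0) (hu : pairV u b = 0) (hv : pairV v b = 0) : ¬ NbrV u v := by
  rintro ⟨-, h2, w, hw, huw, hvw⟩
  have hb0 : b ≠ 0 := by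
    rintro rfl
    exact hD (by simp [discV])
  have hk0 : u ⨯₃ v ≠ 0 := by
    intro h
    have e0 := congrFun h 0
    have e1 := congrFun h 1
    have e2 := congrFun h 2
    simp [cross_apply] at e0 e1 e2
    refine h2 (exists_smul_of_minors hu0 ?_ ?_ ?_)
    · linear_combination e2
    · linear_combination -e1
    · linear_combination e0
  -- Every line through `u` and `v` is a multiple of their cross product.
  have hline : ∀ x : Fin 3 → K, pairV u x = 0 → pairV v x = 0 → ∃ c : K, c • (u ⨯₃ v) = x := by
    intro x hux hvx
    simp only [pairV] at hux hvx
    refine exists_smul_of_minors hk0 ?_ ?_ ?_ <;> simp [cross_apply]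
    · linear_combination v 2 * hux - u 2 * hvx
    · linear_combination u 1 * hvx - v 1 * hux
    · linear_combination v 0 * hux - u 0 * hvx
  obtain ⟨c, hc⟩ := hline b hu hv
  obtain ⟨k, rfl⟩ := hline w huw hvw
  have hc0 : c ≠ 0 := by
    rintro rfl
    exact hb0 (by rw [← hc, zero_smul])
  refine hw ?_
  have : k • (u ⨯₃ v) = (k * c⁻¹) • b := by
    rw [← hc, smul_smul, mul_assoc, inv_mul_cancel₀ hc0, mul_one]
  rw [this, discV_smul]
  exact (IsSquare.sq _).mul hsq

/-- Conjugation by the homology has no fixed point among the `M` moving `p` to a neighbour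
of `u`, when `p` and `u` lie on the axis and the axis is a secant. -/
lemma conj_ne {b u p : Fin 3 → K} (h2 : (2 : K) ≠ 0) (hD : discV b ≠ 0)
    (hsq : IsSquare (discV b)) (hu0 : u ≠ 0) (hu : pairV u b = 0) (hp : pairV p b = 0)
    {M : Matrix (Fin 3) (Fin 3) K} (h : NbrV u (Matrix.vecMul p M)) : conjR b M ≠ M := by
  intro hM
  refine not_nbr_of_secant hD hsq hu0 hu ?_ h
  have hcomm : refl b * M = M * refl b := by
    have e : M * refl b = (discV b ^ 2)⁻¹ • (refl b * M * (refl b * refl b)) := by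
      conv_lhs => rw [← hM, conjR]
      rw [Matrix.smul_mul, mul_assoc (refl b * M)]
    rw [e, refl_mul_refl, Matrix.mul_smul, mul_one, smul_smul,
      inv_mul_cancel₀ (pow_ne_zero 2 hD), one_smul]
  have hfix : Matrix.vecMul (Matrix.vecMul p M) (refl b) = discV b • Matrix.vecMul p M := by
    rw [Matrix.vecMul_vecMul, ← hcomm, ← Matrix.vecMul_vecMul, vecMul_refl_of_pairV b p hp,
      Matrix.smul_vecMul]
  generalize Matrix.vecMul p M = v at hfix ⊢
  rw [vecMul_refl, add_eq_left] at hfix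
  have e0 := congrFun hfix 0
  have e1 := congrFun hfix 1
  have e2 := congrFun hfix 2
  simp at e0 e1 e2
  -- Pairing the pole `(2 b2, -b1, 2 b0)` with `b` gives `-discV b`, which is nonzero.
  have : 2 * pairV v b * discV b = 0 := by
    simp only [discV]
    grind
  simpa [h2, hD] using this

/-! ### The parity count -/

lemma even_ncard_of_involution {α : Type*} [Finite α] (s : Set α) (f : α → α)
    (hmem : ∀ a ∈ s, f a ∈ s) (hinv : ∀ a, f (f a) = a) (hne : ∀ a ∈ s, f a ≠ a) :
    Even s.ncard := by
  have hs : s.Finite := s.toFinite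
  rw [Set.ncard_eq_toFinset_card s hs, ← ZMod.natCast_eq_zero_iff_even]
  have := Finset.sum_involution (s := hs.toFinset) (f := fun _ => (1 : ZMod 2))
    (fun a _ => f a) (fun _ _ => by decide) (fun a ha _ => hne a (by simpa using ha))
    (fun a ha => by simpa using hmem a (by simpa using ha)) (fun a _ => hinv a)
  simpa using this

/-- The parity statement for an arbitrary set `C` of matrices stable under the homology whose axis
is the secant `b` through `p` and `r`. -/
lemma even_of_stable (h1 : Fintype.card K % 4 = 1) (p r : Pt K) (hp : Internal K p)
    {b : Fin 3 → K} (hD : discV b ≠ 0) (hsq : IsSquare (discV b))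
    (hpb : pairV p.rep b = 0) (hrb : pairV r.rep b = 0) (C : Set (Matrix (Fin 3) (Fin 3) K))
    (hC : ∀ M ∈ C, conjR b M ∈ C) : Even ((Uset K p (NbhdSet K r) ∩ C).ncard) := by
  have h2 : (2 : K) ≠ 0 := by
    refine Ring.two_ne_zero fun h => ?_
    rw [FiniteField.even_card_iff_char_two] at h
    omega
  refine even_ncard_of_involution _ (conjR b) ?_ (conjR_conjR hD) ?_
  · rintro M ⟨hU, hMC⟩
    rw [mem_Uset_iff h1 p r hp] at hU
    exact ⟨(mem_Uset_iff h1 p r hp _).2 ⟨conj_mem_Hset hD hU.1, nbr_conj hD hrb hpb hU.2⟩,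
      hC M hMC⟩
  · rintro M ⟨hU, -⟩
    rw [mem_Uset_iff h1 p r hp] at hU
    exact conj_ne h2 hD hsq r.rep_nonzero hrb hpb hU.2

end Reflection

/-- `q ≡ 1 (mod 4)`, `p ≠ r` internal, line `pr` a secant: `|U_{p,N(r)} ∩ C|`
is even for `C = {1}`, `[4]`, every `[θ]`, and every `[π]`. -/
theorem Upr_parity_secant_one (h1 : Fintype.card K % 4 = 1) (p r : Pt K)
    (hp : Internal K p) (hr : Internal K r) (hne : p ≠ r)
    (hline : SecantThru K p r) :
    Even ((Uset K p (NbhdSet K r) ∩ {1}).ncard) ∧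
    Even ((Uset K p (NbhdSet K r) ∩ class4 K).ncard) ∧
    (∀ θ : K, θ ≠ 0 → IsSquare θ → θ ≠ 4 → θ - 4 ≠ 0 → IsSquare (θ - 4) →
      Even ((Uset K p (NbhdSet K r) ∩ classOf K θ).ncard)) ∧
    (∀ π : K, π ≠ 0 → IsSquare π → π ≠ 4 → Nonsq K (π - 4) →
      Even ((Uset K p (NbhdSet K r) ∩ classOf K π).ncard)) := by
  obtain ⟨l, hpl, hrl, hD, hsq⟩ := hline
  have hD' : discV l.rep ≠ 0 := hD
  have hclass : ∀ s : K, ∀ M ∈ classOf K s, conjR l.rep M ∈ classOf K s := fun s M hM =>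
    ⟨conj_mem_Hset hD' hM.1, by rw [trace_conjR hD']; exact hM.2⟩
  have key := even_of_stable h1 p r hp hD' hsq hpl hrl
  refine ⟨key _ ?_, key _ ?_, fun θ _ _ _ _ _ => key _ (hclass θ),
    fun π _ _ _ _ => key _ (hclass π)⟩
  · rintro M rfl
    exact conjR_one hD'
  · rintro M ⟨hM, ht, hM1⟩
    refine ⟨conj_mem_Hset hD' hM, by rw [trace_conjR hD']; exact ht, fun h => hM1 ?_⟩
    rw [← conjR_conjR hD' M, h, conjR_one hD']

end ConicPaper
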